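/- Let f, g : ℝ → ℝ be real polynomial functions of the same degree d ≥ 1, each having exactly the same number p ≥ 2 of critical points. Then f and g are Lipschitz equivalent if and only if their multiplicity symbols are similar. -/

import Mathlib

open Filter Topology

/-- Two functions `f, g : ℝ → ℝ` are Lipschitz equivalent if there is a bi-Lipschitz
homeomorphism `φ` of `ℝ` and a constant `c > 0` with `g ∘ φ = c·f`. -/
def LipschitzEquivFun (f g : ℝ → ℝ) : Prop :=
  ∃ φ : ℝ → ℝ, Function.Bijective φ ∧ (∃ K : NNReal, LipschitzWith K φ) ∧
    (∃ K : NNReal, LipschitzWith K (Function.invFun φ)) ∧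
    ∃ c : ℝ, 0 < c ∧ ∀ t : ℝ, g (φ t) = c * f t

/-- The multiplicity of a function `f` at `t₀`: the least `k ≥ 1` such that the `k`-th
derivative of `f` at `t₀` is nonzero. -/
noncomputable def multAt (f : ℝ → ℝ) (t₀ : ℝ) : ℕ :=
  sInf {k : ℕ | 1 ≤ k ∧ iteratedDeriv k f t₀ ≠ 0}

/-!
A bi-Lipschitz `φ` with `Q ∘ φ = c P` preserves the order of vanishing of `P - P(x)` at `x`, hence
carries critical points to critical points with their multiplicities and values; being monotone or
antitone, it induces a direct or a reverse similarity.

Conversely, after rescaling `P` and possibly reflecting the line, the critical values and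
multiplicities agree in order. The signed variations `F` of `P` and `G` of `Q` from the first
critical point are coordinates in which both graphs have slopes `±1` between the same breakpoints,
so `φ = G⁻¹ ∘ F` matches the critical points and `(Q ∘ φ)' = ε P'` with `ε = ±1`. Both derivatives
have the same roots with multiplicity along `φ`, so `ε` is constant, and comparing the values at
two distinct critical points gives `ε = 1`, that is `Q ∘ φ = P`. Finally `φ' = P' / (Q' ∘ φ)` is
bounded: near a point where `P'` has order `m` we have `|P'|^(m+1) ≍ |P - P(x)|^m`, and near
infinity `|P'|^d ≍ |P|^(d-1)`, with the same relations for `Q`, while `P = Q ∘ φ`.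
-/

open Polynomial Asymptotics Bornology Set
open scoped NNReal

section Calculus

lemma hasDerivAt_of_comp_eq {𝕜 : Type*} [NontriviallyNormedField 𝕜] [CompleteSpace 𝕜]
    {φ F H : 𝕜 → 𝕜} {x F' H' : 𝕜} (hφ : ContinuousAt φ x) (hcomp : ∀ᶠ y in 𝓝 x, H (φ y) = F y)
    (hF : HasDerivAt F F' x) (hH : HasStrictDerivAt H H' (φ x)) (hH' : H' ≠ 0) :
    HasDerivAt φ (F' / H') x := by
  have hinv : HasDerivAt (hH.localInverse H H' (φ x) hH') H'⁻¹ (F x) :=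
    hcomp.self_of_nhds ▸ (hH.to_localInverse hH').hasDerivAt
  have hleft : ∀ᶠ y in 𝓝 (φ x), hH.localInverse H H' (φ x) hH' (H y) = y :=
    (hH.hasStrictFDerivAt_equiv hH').eventually_left_inverse
  rw [div_eq_inv_mul]
  refine (hinv.comp x hF).congr_of_eventuallyEq ?_
  filter_upwards [hφ.eventually hleft, hcomp] with y hy hy'
  rw [Function.comp_apply, ← hy', hy]

lemma lipschitzWith_of_nnnorm_deriv_le_off_countable {E : Type*} [NormedAddCommGroup E]
    [NormedSpace ℝ E] [CompleteSpace E] [SecondCountableTopology E] {f : ℝ → E} {s : Set ℝ}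
    {K : ℝ≥0} (hs : s.Countable) (hf : Continuous f) (hd : ∀ x ∉ s, DifferentiableAt ℝ f x)
    (hK : ∀ x ∉ s, ‖deriv f x‖₊ ≤ K) : LipschitzWith K f := by
  have hK_ae : ∀ᵐ x, ‖deriv f x‖ ≤ K := by
    filter_upwards [hs.ae_notMem MeasureTheory.volume] with x hx using hK x hx
  refine LipschitzWith.of_dist_le_mul fun x y ↦ ?_
  have hint : IntervalIntegrable (deriv f) MeasureTheory.volume y x :=
    (intervalIntegrable_const (c := (K : ℝ))).mono_fun
      (stronglyMeasurable_deriv f).aestronglyMeasurable (by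
        filter_upwards [MeasureTheory.ae_restrict_of_ae hK_ae] with x hx
        simpa using hx)
  have hFTC : ∫ z in y..x, deriv f z = f x - f y :=
    MeasureTheory.integral_eq_of_hasDerivAt_off_countable f (deriv f) hs hf.continuousOn
      (fun z hz ↦ (hd z hz.2).hasDerivAt) hint
  rw [dist_eq_norm, ← hFTC, Real.dist_eq]
  exact intervalIntegral.norm_integral_le_of_norm_le_const_ae (hK_ae.mono fun _ h _ ↦ h)

lemma isBigO_top_of_nhds_of_cocompact {X E F : Type*} [TopologicalSpace X] [Norm E]
    [SeminormedAddCommGroup F] {f : X → E} {g : X → F} (hnhds : ∀ x, f =O[𝓝 x] g)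
    (hcocompact : f =O[cocompact X] g) : f =O[⊤] g := by
  obtain ⟨c, hc⟩ := hcocompact.bound
  obtain ⟨k, hk, hkc⟩ := mem_cocompact.1 hc
  have hcompl : f =O[𝓟 kᶜ] g := isBigO_principal.2 ⟨c, hkc⟩
  have hcompact : f =O[𝓟 k] g := by
    refine hk.induction_on (p := fun s ↦ f =O[𝓟 s] g) (by simp)
      (fun s t hst ht ↦ ht.mono (principal_mono.2 hst)) (fun s t hs ht ↦ ?_) fun x _ ↦ ?_
    · exact sup_principal (s := s) ▸ hs.sup ht
    · obtain ⟨c, hc⟩ := (hnhds x).bound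
      exact ⟨_, mem_nhdsWithin_of_mem_nhds hc, isBigO_principal.2 ⟨c, fun _ h ↦ h⟩⟩
  simpa [sup_principal] using hcompact.sup hcompl

lemma abs_integral_eq_integral_abs_of_ne_zero {f : ℝ → ℝ} {a b : ℝ} (hab : a ≤ b)
    (hf : ContinuousOn f (Ioo a b)) (hne : ∀ x ∈ Ioo a b, f x ≠ 0) :
    |∫ x in a..b, f x| = ∫ x in a..b, |f x| := by
  have hnonneg : 0 ≤ ∫ x in a..b, |f x| :=
    intervalIntegral.integral_nonneg hab fun x _ ↦ abs_nonneg (f x)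
  rcases isPreconnected_Ioo.eq_or_eq_neg_of_sq_eq hf hf.abs (fun x _ ↦ (sq_abs (f x)).symm)
    fun {x} hx ↦ abs_ne_zero.2 (hne x hx) with h | h
  · rw [intervalIntegral.integral_congr_Ioo_of_le hab h]
    exact abs_of_nonneg hnonneg
  · rw [intervalIntegral.integral_congr_Ioo_of_le hab h]
    simp [abs_of_nonneg hnonneg]

lemma eq_of_pow_isTheta_pow {𝕜 : Type*} [NontriviallyNormedField 𝕜] {a : 𝕜} {m n : ℕ}
    (h : (fun x ↦ (x - a) ^ m) =Θ[𝓝 a] fun x ↦ (x - a) ^ n) : m = n := by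
  have not_isBigO {k l : ℕ} (hkl : k < l) :
      ¬ (fun x : 𝕜 ↦ (x - a) ^ k) =O[𝓝 a] fun x ↦ (x - a) ^ l := fun hO ↦ by
    have ho : (fun x : 𝕜 ↦ (x - a) ^ l) =o[𝓝 a] fun x ↦ (x - a) ^ k :=
      (isLittleO_pow_pow hkl).comp_tendsto (tendsto_sub_nhds_zero_iff.2 tendsto_id)
    refine isLittleO_irrefl (Eventually.frequently (f := 𝓝[≠] a) ?_ |>.filter_mono
      nhdsWithin_le_nhds) (ho.trans_isBigO hO)
    filter_upwards [self_mem_nhdsWithin] with x hx using pow_ne_zero l (sub_ne_zero.2 hx)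
  exact le_antisymm (not_lt.1 fun hlt ↦ not_isBigO hlt h.2) (not_lt.1 fun hlt ↦ not_isBigO hlt h.1)

end Calculus

section Multiplicity

lemma sub_C_ne_zero_of_derivative_ne_zero {R : Type*} [Ring R] {P : R[X]}
    (hP : derivative P ≠ 0) (a : R) : P - C a ≠ 0 := fun h ↦
  hP (by simpa using congrArg derivative h)

lemma rootMultiplicity_sub_C_eval {R : Type*} [CommRing R] [IsDomain R] [CharZero R] {P : R[X]}
    (hP : derivative P ≠ 0) (x : R) :
    (P - C (P.eval x)).rootMultiplicity x = (derivative P).rootMultiplicity x + 1 := by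
  have hroot : (P - C (P.eval x)).IsRoot x := by simp
  have hpos := (rootMultiplicity_pos (sub_C_ne_zero_of_derivative_ne_zero hP _)).2 hroot
  have hderiv := derivative_rootMultiplicity_of_root hroot
  rw [derivative_sub, derivative_C, sub_zero] at hderiv
  lia

lemma iteratedDeriv_eval {𝕜 : Type*} [NontriviallyNormedField 𝕜] (P : 𝕜[X]) (k : ℕ) :
    iteratedDeriv k (fun x ↦ P.eval x) = fun x ↦ (derivative^[k] P).eval x := by
  induction k with
  | zero => simp
  | succ k ih => funext x; rw [iteratedDeriv_succ, ih, Polynomial.deriv,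
      Function.iterate_succ_apply']

lemma multAt_eval {P : ℝ[X]} (hP : derivative P ≠ 0) (x : ℝ) :
    multAt (fun y ↦ P.eval y) x = (derivative P).rootMultiplicity x + 1 := by
  refine IsLeast.csInf_eq ⟨⟨Nat.le_add_left _ _, ?_⟩, fun k ⟨hk, hne⟩ ↦ ?_⟩
  · simp only [iteratedDeriv_eval, Function.iterate_succ_apply,
      eval_iterate_derivative_rootMultiplicity, nsmul_eq_mul]
    exact mul_ne_zero (Nat.cast_ne_zero.2 (Nat.factorial_ne_zero _))
      (eval_divByMonic_pow_rootMultiplicity_ne_zero x hP)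
  · obtain ⟨k, rfl⟩ := Nat.exists_eq_add_of_le' hk
    rw [iteratedDeriv_eval, Function.iterate_succ_apply] at hne
    exact Nat.succ_le_succ <| not_lt.1 fun hlt ↦
      hne (isRoot_iterate_derivative_of_lt_rootMultiplicity hlt)

lemma multAt_const_mul {c : ℝ} (hc : c ≠ 0) (f : ℝ → ℝ) (x : ℝ) :
    multAt (fun y ↦ c * f y) x = multAt f x := by
  simp only [multAt, iteratedDeriv_const_mul_field, mul_ne_zero_iff_left hc]

lemma multAt_comp_neg (f : ℝ → ℝ) (x : ℝ) : multAt (fun y ↦ f (-y)) x = multAt f (-x) := by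
  simp [multAt, iteratedDeriv_comp_neg]

end Multiplicity

section Growth

variable {𝕜 : Type*} [NontriviallyNormedField 𝕜]

lemma eval_isTheta_sub_pow_rootMultiplicity {P : 𝕜[X]} (hP : P ≠ 0) (x : 𝕜) :
    P.eval =Θ[𝓝 x] fun y ↦ (y - x) ^ P.rootMultiplicity x := by
  obtain ⟨A, hA, hAx⟩ := exists_eq_pow_rootMultiplicity_mul_and_not_dvd P hP x
  rw [dvd_iff_isRoot] at hAx
  have hconst : A.eval =Θ[𝓝 x] fun _ ↦ (1 : 𝕜) :=
    ((isEquivalent_const_iff_tendsto hAx).2 A.continuous.continuousAt).isTheta.trans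
      (isTheta_const_const hAx one_ne_zero)
  have hPA : P.eval = fun y ↦ (y - x) ^ P.rootMultiplicity x * A.eval y := by
    funext y
    conv_lhs => rw [hA]
    simp
  rw [hPA]
  simpa using (isTheta_refl (fun y ↦ (y - x) ^ P.rootMultiplicity x) (𝓝 x)).mul hconst

lemma eval_sub_eval_isTheta [CharZero 𝕜] {P : 𝕜[X]} (hP : derivative P ≠ 0) (x : 𝕜) :
    (fun y ↦ P.eval y - P.eval x) =Θ[𝓝 x]
      fun y ↦ (y - x) ^ ((derivative P).rootMultiplicity x + 1) := by
  have h := eval_isTheta_sub_pow_rootMultiplicity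
    (sub_C_ne_zero_of_derivative_ne_zero hP (P.eval x)) x
  simpa only [eval_sub, eval_C, rootMultiplicity_sub_C_eval hP] using h

lemma derivative_pow_isTheta_nhds [CharZero 𝕜] {P : 𝕜[X]} (hP : derivative P ≠ 0) (x : 𝕜) :
    (fun y ↦ (derivative P).eval y ^ ((derivative P).rootMultiplicity x + 1)) =Θ[𝓝 x]
      fun y ↦ (P.eval y - P.eval x) ^ (derivative P).rootMultiplicity x := by
  have hP' := (eval_isTheta_sub_pow_rootMultiplicity hP x).pow
    ((derivative P).rootMultiplicity x + 1)
  have hPx := (eval_sub_eval_isTheta hP x).pow ((derivative P).rootMultiplicity x)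
  simp only [pow_right_comm _ (_ + 1)] at hPx
  exact hP'.trans hPx.symm

lemma derivative_pow_isTheta_cobounded [CharZero 𝕜] {P : 𝕜[X]} (hP : 0 < P.natDegree) :
    (fun y ↦ (derivative P).eval y ^ P.natDegree) =Θ[cobounded 𝕜]
      fun y ↦ P.eval y ^ (P.natDegree - 1) := by
  have hdeg : (derivative P ^ P.natDegree).degree = (P ^ (P.natDegree - 1)).degree := by
    rw [degree_eq_natDegree (pow_ne_zero _ (derivative_ne_zero.2 hP.ne')),
      degree_eq_natDegree (pow_ne_zero _ (ne_zero_of_natDegree_gt hP)), natDegree_pow,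
      natDegree_pow, natDegree_derivative, mul_comm]
  simp only [← eval_pow]
  exact ⟨isBigO_cobounded_of_degree_le hdeg.le, isBigO_cobounded_of_degree_le hdeg.ge⟩

lemma derivative_isBigO_derivative_comp [CharZero 𝕜] [ProperSpace 𝕜] {P Q : 𝕜[X]} {φ : 𝕜 ≃ₜ 𝕜}
    (hdeg : P.natDegree = Q.natDegree) (hP : 0 < P.natDegree) (hφ : ∀ x, Q.eval (φ x) = P.eval x)
    (hmult : ∀ x, (derivative Q).rootMultiplicity (φ x) = (derivative P).rootMultiplicity x) :
    (fun x ↦ (derivative P).eval x) =O[⊤] fun x ↦ (derivative Q).eval (φ x) := by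
  refine isBigO_top_of_nhds_of_cocompact (fun x ↦ ?_) ?_
  · have hPx := derivative_pow_isTheta_nhds (derivative_ne_zero.2 hP.ne') x
    have hQx := derivative_pow_isTheta_nhds (derivative_ne_zero.2 (hdeg ▸ hP.ne')) (φ x)
    rw [hmult] at hQx
    have hQφ := hQx.2.comp_tendsto φ.continuous.continuousAt
    simp only [Function.comp_def, hφ] at hQφ
    exact (hPx.1.trans hQφ).of_pow (Nat.succ_ne_zero _)
  · have hPinf := derivative_pow_isTheta_cobounded hP
    have hQinf := derivative_pow_isTheta_cobounded (P := Q) (hdeg ▸ hP)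
    rw [Metric.cobounded_eq_cocompact] at hPinf hQinf
    have hφ_tendsto : Tendsto φ (cocompact 𝕜) (cocompact 𝕜) :=
      φ.isClosedEmbedding.tendsto_cocompact
    have hQφ := hQinf.2.comp_tendsto hφ_tendsto
    rw [← hdeg] at hQφ
    simp only [Function.comp_def, hφ] at hQφ
    exact (hPinf.1.trans hQφ).of_pow hP.ne'

lemma exists_lipschitzWith_of_eval_comp_eq {P Q : ℝ[X]} {φ : ℝ ≃ₜ ℝ}
    (hdeg : P.natDegree = Q.natDegree) (hP : 0 < P.natDegree) (hφ : ∀ x, Q.eval (φ x) = P.eval x)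
    (hmult : ∀ x, (derivative Q).rootMultiplicity (φ x) = (derivative P).rootMultiplicity x) :
    ∃ K : ℝ≥0, LipschitzWith K φ := by
  obtain ⟨K, hK⟩ := isBigO_top.1 (derivative_isBigO_derivative_comp hdeg hP hφ hmult)
  have hQ {x : ℝ} (hx : ¬ (derivative P).IsRoot x) : (derivative Q).eval (φ x) ≠ 0 := fun h ↦
    hx (by simpa [h] using hK x)
  have hderiv {x : ℝ} (hx : ¬ (derivative P).IsRoot x) :
      HasDerivAt φ ((derivative P).eval x / (derivative Q).eval (φ x)) x :=
    hasDerivAt_of_comp_eq φ.continuous.continuousAt (.of_forall hφ) (P.hasDerivAt x)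
      (Q.hasStrictDerivAt (φ x)) (hQ hx)
  refine ⟨K.toNNReal, lipschitzWith_of_nnnorm_deriv_le_off_countable
    (finite_setOfPred_isRoot (derivative_ne_zero.2 hP.ne')).countable φ.continuous
    (fun x hx ↦ (hderiv hx).differentiableAt) fun x hx ↦ ?_⟩
  rw [(hderiv hx).deriv, ← NNReal.coe_le_coe, coe_nnnorm, norm_div,
    div_le_iff₀ (norm_pos_iff.2 (hQ hx))]
  exact (hK x).trans (by gcongr; exact K.le_coe_toNNReal)

end Growth

section Sign

lemma roots_eq_map_roots {R S : Type*} [CommRing R] [IsDomain R] [CommRing S] [IsDomain S]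
    {P : R[X]} {Q : S[X]} {f : R → S} (hf : Function.Bijective f)
    (hmult : ∀ x, Q.rootMultiplicity (f x) = P.rootMultiplicity x) :
    Q.roots = P.roots.map f := by
  classical
  ext y
  obtain ⟨x, rfl⟩ := hf.surjective y
  rw [Multiset.count_map_eq_count' _ _ hf.injective, count_roots, count_roots, hmult]

lemma exists_eval_eq_prod_roots_mul {R : Type*} [CommRing R] [IsDomain R] {P : R[X]} (hP : P ≠ 0) :
    ∃ A : R[X], (∀ x, A.eval x ≠ 0) ∧
      ∀ x, P.eval x = (P.roots.map fun a ↦ x - a).prod * A.eval x := by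
  obtain ⟨A, hA, -, hroots⟩ := exists_prod_multiset_X_sub_C_mul P
  have hA0 : A ≠ 0 := by rintro rfl; exact hP (by simpa using hA.symm)
  refine ⟨A, fun x hx ↦ ?_, fun x ↦ ?_⟩
  · have hmem := (mem_roots hA0).2 hx
    simp [hroots] at hmem
  · conv_lhs => rw [← hA]
    simp [eval_multiset_prod]

lemma forall_pos_or_forall_neg_of_ne_zero {X : Type*} [TopologicalSpace X] [PreconnectedSpace X]
    {f : X → ℝ} (hf : Continuous f) (hne : ∀ x, f x ≠ 0) : (∀ x, 0 < f x) ∨ ∀ x, f x < 0 := by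
  rcases isPreconnected_univ.eq_or_eq_neg_of_sq_eq hf.continuousOn hf.abs.continuousOn
    (fun x _ ↦ (sq_abs (f x)).symm) fun {x} _ ↦ abs_ne_zero.2 (hne x) with h | h
  · exact .inl fun x ↦ by rw [h (mem_univ x)]; exact abs_pos.2 (hne x)
  · exact .inr fun x ↦ by rw [h (mem_univ x)]; simpa using hne x

lemma eval_mul_eval_comp_nonneg_or_nonpos {R T : ℝ[X]} {φ : ℝ ≃o ℝ} (hR : R ≠ 0)
    (hT : T ≠ 0) (hmult : ∀ x, T.rootMultiplicity (φ x) = R.rootMultiplicity x) :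
    (∀ x, 0 ≤ R.eval x * T.eval (φ x)) ∨ ∀ x, R.eval x * T.eval (φ x) ≤ 0 := by
  obtain ⟨A, hA, hRA⟩ := exists_eval_eq_prod_roots_mul hR
  obtain ⟨B, hB, hTB⟩ := exists_eval_eq_prod_roots_mul hT
  have hfactor (x : ℝ) : R.eval x * T.eval (φ x) =
      (R.roots.map fun a ↦ (x - a) * (φ x - φ a)).prod * (A.eval x * B.eval (φ x)) := by
    rw [hRA, hTB, roots_eq_map_roots φ.bijective hmult, Multiset.map_map, Multiset.prod_map_mul]
    simp only [Function.comp_def]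
    ring
  have hprod (x : ℝ) : 0 ≤ (R.roots.map fun a ↦ (x - a) * (φ x - φ a)).prod := by
    refine Multiset.prod_nonneg fun y hy ↦ ?_
    obtain ⟨a, -, rfl⟩ := Multiset.mem_map.1 hy
    rcases le_total a x with h | h
    · exact mul_nonneg (sub_nonneg.2 h) (sub_nonneg.2 (φ.monotone h))
    · exact mul_nonneg_of_nonpos_of_nonpos (sub_nonpos.2 h) (sub_nonpos.2 (φ.monotone h))
  have hcont : Continuous fun x ↦ A.eval x * B.eval (φ x) :=
    A.continuous.mul (B.continuous.comp φ.continuous)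
  simp only [hfactor]
  rcases forall_pos_or_forall_neg_of_ne_zero hcont fun x ↦ mul_ne_zero (hA x) (hB _) with h | h
  · exact .inl fun x ↦ mul_nonneg (hprod x) (h x).le
  · exact .inr fun x ↦ mul_nonpos_of_nonneg_of_nonpos (hprod x) (h x).le

end Sign

section SignedVariation

/-- The variation of `P` between `a` and `x`, counted negatively for `x < a`. As a coordinate on
the line it makes the graph of `P` piecewise linear with slopes `±1`. -/
noncomputable def signedVariation (P : ℝ[X]) (a x : ℝ) : ℝ :=
  ∫ y in a..x, |(derivative P).eval y|

variable {P : ℝ[X]}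

lemma hasStrictDerivAt_signedVariation (P : ℝ[X]) (a x : ℝ) :
    HasStrictDerivAt (signedVariation P a) |(derivative P).eval x| x :=
  (derivative P).continuous.abs.integral_hasStrictDerivAt a x

lemma signedVariation_sub (P : ℝ[X]) (a x y : ℝ) :
    signedVariation P a y - signedVariation P a x = signedVariation P x y :=
  intervalIntegral.integral_interval_sub_left
    ((derivative P).continuous.abs.intervalIntegrable _ _)
    ((derivative P).continuous.abs.intervalIntegrable _ _)

lemma signedVariation_neg (P : ℝ[X]) (a x : ℝ) :
    signedVariation (-P) a x = signedVariation P a x := by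
  simp only [signedVariation, derivative_neg, eval_neg, abs_neg]

lemma integral_derivative_eval (P : ℝ[X]) (a b : ℝ) :
    ∫ x in a..b, (derivative P).eval x = P.eval b - P.eval a :=
  intervalIntegral.integral_eq_sub_of_hasDerivAt (fun x _ ↦ P.hasDerivAt x)
    ((derivative P).continuous.intervalIntegrable _ _)

lemma abs_eval_sub_le_abs_signedVariation (P : ℝ[X]) (a x : ℝ) :
    |P.eval x - P.eval a| ≤ |signedVariation P a x| := by
  rw [← integral_derivative_eval]
  exact intervalIntegral.norm_integral_le_abs_integral_norm (f := fun y ↦ (derivative P).eval y)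

lemma signedVariation_eq_abs_eval_sub {a b : ℝ} (hab : a ≤ b)
    (hne : ∀ x ∈ Ioo a b, (derivative P).eval x ≠ 0) :
    signedVariation P a b = |P.eval b - P.eval a| := by
  rw [← integral_derivative_eval,
    abs_integral_eq_integral_abs_of_ne_zero hab (derivative P).continuousOn hne, signedVariation]

lemma signedVariation_pos {a b : ℝ} (hP : derivative P ≠ 0) (hab : a < b) :
    0 < signedVariation P a b := by
  obtain ⟨x, hx, hx0⟩ :=
    ((Icc_infinite hab).sdiff (finite_setOfPred_isRoot hP)).nonempty
  exact intervalIntegral.integral_pos hab (derivative P).continuous.abs.continuousOn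
    (fun y _ ↦ abs_nonneg _) ⟨x, hx, abs_pos.2 hx0⟩

lemma strictMono_signedVariation (hP : derivative P ≠ 0) (a : ℝ) :
    StrictMono (signedVariation P a) := fun x y hxy ↦ by
  rw [← sub_pos, signedVariation_sub]
  exact signedVariation_pos hP hxy

lemma continuous_signedVariation (P : ℝ[X]) (a : ℝ) : Continuous (signedVariation P a) :=
  continuous_iff_continuousAt.2 fun x ↦
    (hasStrictDerivAt_signedVariation P a x).hasDerivAt.continuousAt

lemma tendsto_abs_signedVariation (hP : derivative P ≠ 0) (a : ℝ) :
    Tendsto (fun x ↦ |signedVariation P a x|) (cobounded ℝ) atTop := by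
  have hdeg : 0 < P.degree :=
    natDegree_pos_iff_degree_pos.1 (Nat.pos_of_ne_zero (derivative_ne_zero.1 hP))
  have hinf : Tendsto (fun x ↦ |P.eval x| - |P.eval a|) (cobounded ℝ) atTop :=
    tendsto_atTop_add_const_right _ _ (P.tendsto_norm_atTop hdeg tendsto_norm_cobounded_atTop)
  exact tendsto_atTop_mono (fun x ↦ (abs_sub_abs_le_abs_sub _ _).trans
    (abs_eval_sub_le_abs_signedVariation P a x)) hinf

lemma surjective_signedVariation (hP : derivative P ≠ 0) (a : ℝ) :
    Function.Surjective (signedVariation P a) := by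
  have hself : signedVariation P a a = 0 := intervalIntegral.integral_same
  have hmono := (strictMono_signedVariation hP a).monotone
  refine (continuous_signedVariation P a).surjective ?_ ?_
  · refine ((tendsto_abs_signedVariation hP a).mono_left
      IsOrderBornology.atTop_le_cobounded).congr' ?_
    filter_upwards [eventually_ge_atTop a] with x hx
    exact abs_of_nonneg (hself ▸ hmono hx)
  · refine (tendsto_neg_atTop_atBot.comp
      ((tendsto_abs_signedVariation hP a).mono_left IsOrderBornology.atBot_le_cobounded)).congr' ?_
    filter_upwards [eventually_le_atBot a] with x hx
    rw [Function.comp_apply, abs_of_nonpos (hself ▸ hmono hx), neg_neg]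

/-- The change of coordinate `signedVariation P a` as an order automorphism of the line. -/
noncomputable def signedVariationIso (hP : derivative P ≠ 0) (a : ℝ) : ℝ ≃o ℝ :=
  (strictMono_signedVariation hP a).orderIsoOfSurjective _ (surjective_signedVariation hP a)

end SignedVariation

section CriticalPoints

/-- `t` lists the critical points of `P` in increasing order. -/
structure EnumeratesCriticalPoints {p : ℕ} (P : ℝ[X]) (t : Fin p → ℝ) : Prop where
  strictMono : StrictMono t
  derivative_eval_eq_zero_iff : ∀ x, (derivative P).eval x = 0 ↔ ∃ i, x = t i

namespace EnumeratesCriticalPoints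

variable {p n : ℕ} {P Q : ℝ[X]} {t s : Fin p → ℝ}

lemma derivative_ne_zero (ht : EnumeratesCriticalPoints P t) : derivative P ≠ 0 := fun h ↦
  infinite_univ (α := ℝ) <| (finite_range t).subset fun x _ ↦ by
    obtain ⟨i, rfl⟩ := (ht.derivative_eval_eq_zero_iff x).1 (by simp [h])
    exact mem_range_self i

lemma derivative_eval_ne_zero_of_mem_Ioo {t : Fin (n + 1) → ℝ} (ht : EnumeratesCriticalPoints P t)
    (i : Fin n) {x : ℝ} (hx : x ∈ Ioo (t i.castSucc) (t i.succ)) : (derivative P).eval x ≠ 0 := by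
  rw [Ne, ht.derivative_eval_eq_zero_iff]
  rintro ⟨j, rfl⟩
  have hlt := ht.strictMono.lt_iff_lt.1 hx.1
  have hgt := ht.strictMono.lt_iff_lt.1 hx.2
  exact (Fin.castSucc_lt_iff_succ_le.1 hlt).not_gt hgt

lemma C_mul (ht : EnumeratesCriticalPoints P t) {c : ℝ} (hc : c ≠ 0) :
    EnumeratesCriticalPoints (C c * P) t :=
  ⟨ht.strictMono, fun x ↦ by simp [hc, ht.derivative_eval_eq_zero_iff]⟩

lemma comp_neg_X (ht : EnumeratesCriticalPoints P t) :
    EnumeratesCriticalPoints (P.comp (-X)) fun i ↦ -t i.rev := by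
  have hderiv (x : ℝ) : (derivative (P.comp (-X))).eval x = -(derivative P).eval (-x) := by
    simp [derivative_comp]
  refine ⟨fun i j hij ↦ neg_lt_neg (ht.strictMono (Fin.rev_lt_rev.2 hij)), fun x ↦ ?_⟩
  rw [hderiv, neg_eq_zero, ht.derivative_eval_eq_zero_iff]
  exact ⟨fun ⟨i, hi⟩ ↦ ⟨i.rev, by simp [← hi]⟩, fun ⟨i, hi⟩ ↦ ⟨i.rev, by simp [hi]⟩⟩

lemma signedVariation_succ {t : Fin (n + 1) → ℝ} (ht : EnumeratesCriticalPoints P t) (i : Fin n) :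
    signedVariation P (t i.castSucc) (t i.succ) = |P.eval (t i.succ) - P.eval (t i.castSucc)| :=
  signedVariation_eq_abs_eval_sub (ht.strictMono i.castSucc_lt_succ).le fun _ ↦
    ht.derivative_eval_ne_zero_of_mem_Ioo i

lemma signedVariation_eq {t s : Fin (n + 1) → ℝ} (ht : EnumeratesCriticalPoints P t)
    (hs : EnumeratesCriticalPoints Q s) (heval : ∀ i, Q.eval (s i) = P.eval (t i))
    (i : Fin (n + 1)) : signedVariation Q (s 0) (s i) = signedVariation P (t 0) (t i) := by
  induction i using Fin.induction with
  | zero => simp only [signedVariation, intervalIntegral.integral_same]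
  | succ i ih =>
    have hPi := signedVariation_sub P (t 0) (t i.castSucc) (t i.succ)
    have hQi := signedVariation_sub Q (s 0) (s i.castSucc) (s i.succ)
    rw [ht.signedVariation_succ] at hPi
    rw [hs.signedVariation_succ, heval, heval] at hQi
    linarith

lemma rootMultiplicity_derivative_comp_eq (ht : EnumeratesCriticalPoints P t)
    (hs : EnumeratesCriticalPoints Q s) {φ : ℝ → ℝ} (hφ : Function.Injective φ)
    (hφt : ∀ i, φ (t i) = s i) (hmult : ∀ i, (derivative Q).rootMultiplicity (s i) =
      (derivative P).rootMultiplicity (t i)) (x : ℝ) :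
    (derivative Q).rootMultiplicity (φ x) = (derivative P).rootMultiplicity x := by
  by_cases hx : ∃ i, x = t i
  · obtain ⟨i, rfl⟩ := hx
    rw [hφt, hmult]
  · have hφx : ¬ ∃ i, φ x = s i := fun ⟨i, hi⟩ ↦ hx ⟨i, hφ (hi.trans (hφt i).symm)⟩
    rw [← ht.derivative_eval_eq_zero_iff] at hx
    rw [← hs.derivative_eval_eq_zero_iff] at hφx
    rw [rootMultiplicity_eq_zero hx, rootMultiplicity_eq_zero hφx]

end EnumeratesCriticalPoints

end CriticalPoints

section Straightening

variable {P Q : ℝ[X]}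

lemma eval_comp_sub_eval_comp_of_signedVariation_eq {φ : ℝ → ℝ} {a b : ℝ} (hP : derivative P ≠ 0)
    (hφc : Continuous φ) (hφ : ∀ x, signedVariation Q b (φ x) = signedVariation P a x)
    (hne : ∀ x, (derivative P).eval x ≠ 0 → (derivative Q).eval (φ x) ≠ 0)
    (hsign : ∀ x, 0 ≤ (derivative P).eval x * (derivative Q).eval (φ x)) (x y : ℝ) :
    Q.eval (φ x) - Q.eval (φ y) = P.eval x - P.eval y := by
  have hderiv : ∀ x ∉ {x | (derivative P).IsRoot x},
      HasDerivAt (fun x ↦ Q.eval (φ x) - P.eval x) 0 x := by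
    intro x hx
    have hQx := hne x hx
    have hφ' := hasDerivAt_of_comp_eq hφc.continuousAt (.of_forall hφ)
      (hasStrictDerivAt_signedVariation P a x).hasDerivAt
      (hasStrictDerivAt_signedVariation Q b (φ x)) (abs_ne_zero.2 hQx)
    have hquot : |(derivative P).eval x| / |(derivative Q).eval (φ x)| =
        (derivative P).eval x / (derivative Q).eval (φ x) := by
      rw [← abs_div, abs_of_nonneg (div_nonneg_iff.2 (mul_nonneg_iff.1 (hsign x)))]
    rw [hquot] at hφ'
    have hsub := ((Q.hasDerivAt (φ x)).comp x hφ').sub (P.hasDerivAt x)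
    rwa [mul_div_cancel₀ _ hQx, sub_self] at hsub
  have hlip : LipschitzWith 0 fun x ↦ Q.eval (φ x) - P.eval x :=
    lipschitzWith_of_nnnorm_deriv_le_off_countable (finite_setOfPred_isRoot hP).countable
      ((Q.continuous.comp hφc).sub P.continuous)
      (fun x hx ↦ (hderiv x hx).differentiableAt) fun x hx ↦ by simp [(hderiv x hx).deriv]
  have hdist := hlip.dist_le_mul x y
  rw [NNReal.coe_zero, zero_mul, dist_le_zero] at hdist
  linarith

lemma EnumeratesCriticalPoints.exists_orderIso_signedVariation_eq {n : ℕ}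
    {t s : Fin (n + 1) → ℝ} (ht : EnumeratesCriticalPoints P t)
    (hs : EnumeratesCriticalPoints Q s) (heval : ∀ i, Q.eval (s i) = P.eval (t i)) :
    ∃ φ : ℝ ≃o ℝ, (∀ x, signedVariation Q (s 0) (φ x) = signedVariation P (t 0) x) ∧
      ∀ i, φ (t i) = s i := by
  set F := signedVariationIso ht.derivative_ne_zero (t 0)
  set G := signedVariationIso hs.derivative_ne_zero (s 0)
  exact ⟨F.trans G.symm, fun x ↦ G.apply_symm_apply (F x), fun i ↦
    G.symm_apply_eq.2 (ht.signedVariation_eq hs heval i).symm⟩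

lemma EnumeratesCriticalPoints.exists_orderIso_eval_comp_eq {n : ℕ} {t s : Fin (n + 2) → ℝ}
    (ht : EnumeratesCriticalPoints P t) (hs : EnumeratesCriticalPoints Q s)
    (heval : ∀ i, Q.eval (s i) = P.eval (t i))
    (hmult : ∀ i, (derivative Q).rootMultiplicity (s i) = (derivative P).rootMultiplicity (t i)) :
    ∃ φ : ℝ ≃o ℝ, (∀ x, Q.eval (φ x) = P.eval x) ∧
      ∀ x, (derivative Q).rootMultiplicity (φ x) = (derivative P).rootMultiplicity x := by
  have hP := ht.derivative_ne_zero
  have hQ := hs.derivative_ne_zero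
  obtain ⟨φ, hφ, hφt⟩ := ht.exists_orderIso_signedVariation_eq hs heval
  have hφmult := ht.rootMultiplicity_derivative_comp_eq hs φ.injective hφt hmult
  have hne (x : ℝ) (hx : (derivative P).eval x ≠ 0) : (derivative Q).eval (φ x) ≠ 0 := fun h ↦
    ((rootMultiplicity_pos hQ).2 h).ne' ((hφmult x).trans (rootMultiplicity_eq_zero hx))
  refine ⟨φ, fun x ↦ ?_, hφmult⟩
  rcases eval_mul_eval_comp_nonneg_or_nonpos hP hQ hφmult with hsign | hsign
  · have h := eval_comp_sub_eval_comp_of_signedVariation_eq hP φ.continuous hφ hne hsign x (t 0)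
    rw [hφt, heval] at h
    linarith
  · have h := eval_comp_sub_eval_comp_of_signedVariation_eq (P := -P) (a := t 0)
      (by simpa using hP) φ.continuous (by simpa only [signedVariation_neg] using hφ)
      (by simpa using hne) (by simpa using hsign) (t 1) (t 0)
    simp only [hφt, heval, eval_neg] at h
    have hpos := signedVariation_pos hP (ht.strictMono (Fin.castSucc_lt_succ (i := 0)))
    rw [ht.signedVariation_succ, abs_pos, Fin.succ_zero_eq_one, Fin.castSucc_zero] at hpos
    exact absurd (by linarith) hpos

end Straightening

section Equivalence

lemma lipschitzEquivFun_iff {f g : ℝ → ℝ} : LipschitzEquivFun f g ↔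
    ∃ e : ℝ ≃ ℝ, (∃ K, LipschitzWith K e) ∧ (∃ K, LipschitzWith K e.symm) ∧
      ∃ c, 0 < c ∧ ∀ x, g (e x) = c * f x := by
  have hinv (e : ℝ ≃ ℝ) : Function.invFun e = e.symm :=
    Function.invFun_eq_of_injective_of_rightInverse e.injective e.apply_symm_apply
  refine ⟨fun ⟨φ, hφ, hK, hK', hc⟩ ↦ ⟨.ofBijective φ hφ, hK, ?_, hc⟩,
    fun ⟨e, hK, hK', hc⟩ ↦ ⟨e, e.bijective, hK, ?_, hc⟩⟩
  · rwa [← hinv]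
  · rwa [hinv]

lemma LipschitzEquivFun.of_comp_neg {f g : ℝ → ℝ} (h : LipschitzEquivFun (fun x ↦ f (-x)) g) :
    LipschitzEquivFun f g := by
  obtain ⟨e, ⟨K, hK⟩, ⟨K', hK'⟩, c, hc, hfg⟩ := lipschitzEquivFun_iff.1 h
  have hneg : LipschitzWith 1 (Equiv.neg ℝ) := (IsometryEquiv.neg ℝ).isometry.lipschitz
  exact lipschitzEquivFun_iff.2
    ⟨(Equiv.neg ℝ).trans e, ⟨_, hK.comp hneg⟩, ⟨_, hneg.comp hK'⟩, c, hc, fun x ↦ by simp [hfg]⟩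

/-- The multiplicity symbols of `P` and `Q`, read along the lists `t` and `s` of points, agree up
to a positive factor on the values. With `t` replaced by `t ∘ Fin.rev` this is reverse
similarity. -/
def DirectlySimilar {p : ℕ} (P Q : ℝ[X]) (t s : Fin p → ℝ) : Prop :=
  ∃ c : ℝ, 0 < c ∧ ∀ i, Q.eval (s i) = c * P.eval (t i) ∧
    multAt (fun x ↦ Q.eval x) (s i) = multAt (fun x ↦ P.eval x) (t i)

variable {n p : ℕ} {P Q : ℝ[X]}

lemma isTheta_sub_of_lipschitzWith_symm {E F : Type*} [SeminormedAddCommGroup E]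
    [SeminormedAddCommGroup F] {e : E ≃ F} {K K' : ℝ≥0} (hK : LipschitzWith K e)
    (hK' : LipschitzWith K' e.symm) (x : E) : (fun y ↦ e y - e x) =Θ[𝓝 x] fun y ↦ y - x := by
  refine ⟨.of_bound K (.of_forall fun y ↦ hK.norm_sub_le y x),
    .of_bound K' (.of_forall fun y ↦ ?_)⟩
  simpa using hK'.norm_sub_le (e y) (e x)

lemma rootMultiplicity_derivative_eq_of_eval_eq {𝕜 : Type*} [NontriviallyNormedField 𝕜]
    [CharZero 𝕜] {P Q : 𝕜[X]} {e : 𝕜 ≃ 𝕜} {K K' : ℝ≥0} {c : 𝕜} (hP : derivative P ≠ 0)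
    (hQ : derivative Q ≠ 0) (hK : LipschitzWith K e) (hK' : LipschitzWith K' e.symm) (hc : c ≠ 0)
    (h : ∀ x, Q.eval (e x) = c * P.eval x) (x : 𝕜) :
    (derivative Q).rootMultiplicity (e x) = (derivative P).rootMultiplicity x := by
  have he := (isTheta_sub_of_lipschitzWith_symm hK hK' x).pow
    ((derivative Q).rootMultiplicity (e x) + 1)
  have hQx := eval_sub_eval_isTheta hQ (e x)
  have hQe : (fun y ↦ c * (P.eval y - P.eval x)) =Θ[𝓝 x]
      fun y ↦ (e y - e x) ^ ((derivative Q).rootMultiplicity (e x) + 1) := by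
    simp only [mul_sub, ← h]
    exact ⟨hQx.1.comp_tendsto hK.continuous.continuousAt,
      hQx.2.comp_tendsto hK.continuous.continuousAt⟩
  have hPx := (eval_sub_eval_isTheta hP x).const_mul_left hc
  exact Nat.succ_injective (eq_of_pow_isTheta_pow ((he.symm.trans hQe.symm).trans hPx))

lemma comp_eq_or_comp_rev_eq_of_range_eq {α β : Type*} [Preorder α] [PartialOrder β]
    {f : α → β} {t : Fin p → α} {s : Fin p → β} (hf : StrictMono f ∨ StrictAnti f)
    (ht : StrictMono t) (hs : StrictMono s) (h : range (f ∘ t) = range s) :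
    f ∘ t = s ∨ f ∘ t ∘ Fin.rev = s := by
  rcases hf with hf | hf
  · exact .inl (((hf.comp ht).range_inj hs).1 h)
  · refine .inr (((hf.comp (ht.comp_strictAnti Fin.rev_strictAnti)).range_inj hs).1 ?_)
    rw [← Function.comp_assoc, Fin.rev_surjective.range_comp, h]

lemma LipschitzEquivFun.directlySimilar {t s : Fin p → ℝ} (h : LipschitzEquivFun P.eval Q.eval)
    (ht : EnumeratesCriticalPoints P t) (hs : EnumeratesCriticalPoints Q s) :
    DirectlySimilar P Q t s ∨ DirectlySimilar P Q (t ∘ Fin.rev) s := by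
  obtain ⟨e, ⟨K, hK⟩, ⟨K', hK'⟩, c, hc, hPQ⟩ := lipschitzEquivFun_iff.1 h
  have hP := ht.derivative_ne_zero
  have hQ := hs.derivative_ne_zero
  have hmult := rootMultiplicity_derivative_eq_of_eval_eq hP hQ hK hK' hc.ne' hPQ
  have hroot (x : ℝ) : x ∈ range t ↔ e x ∈ range s := by
    simp only [mem_range, eq_comm (b := x), eq_comm (b := e x), ← ht.derivative_eval_eq_zero_iff,
      ← hs.derivative_eval_eq_zero_iff]
    rw [← IsRoot, ← IsRoot, ← rootMultiplicity_pos hP, ← rootMultiplicity_pos hQ, hmult]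
  have hrange : range (e ∘ t) = range s := by
    have hpreimage : range t = preimage e (range s) := Set.ext hroot
    rw [range_comp, hpreimage, image_preimage_eq _ e.surjective]
  have hsim {t' : Fin p → ℝ} (ht' : e ∘ t' = s) : DirectlySimilar P Q t' s := by
    subst ht'
    refine ⟨c, hc, fun i ↦ ⟨hPQ _, ?_⟩⟩
    rw [multAt_eval hP, multAt_eval hQ, Function.comp_apply, hmult]
  exact (comp_eq_or_comp_rev_eq_of_range_eq (hK.continuous.strictMono_of_inj e.injective)
    ht.strictMono hs.strictMono hrange).imp hsim hsim

lemma DirectlySimilar.lipschitzEquivFun {t s : Fin (n + 2) → ℝ} (h : DirectlySimilar P Q t s)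
    (hdeg : P.natDegree = Q.natDegree) (ht : EnumeratesCriticalPoints P t)
    (hs : EnumeratesCriticalPoints Q s) : LipschitzEquivFun P.eval Q.eval := by
  obtain ⟨c, hc, hPQ⟩ := h
  have hcP := ht.C_mul hc.ne'
  have hmult (i) : (derivative Q).rootMultiplicity (s i) =
      (derivative (C c * P)).rootMultiplicity (t i) := by
    have hi := (hPQ i).2
    rw [← multAt_const_mul hc.ne' fun x ↦ P.eval x] at hi
    simp only [← eval_C_mul, multAt_eval hs.derivative_ne_zero,
      multAt_eval hcP.derivative_ne_zero] at hi
    exact Nat.succ_injective hi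
  obtain ⟨φ, hφ, hφmult⟩ := hcP.exists_orderIso_eval_comp_eq hs
    (fun i ↦ by rw [eval_C_mul, (hPQ i).1]) hmult
  have hdeg' : (C c * P).natDegree = Q.natDegree := by rw [natDegree_C_mul hc.ne', hdeg]
  have hQ : 0 < Q.natDegree := Nat.pos_of_ne_zero (derivative_ne_zero.1 hs.derivative_ne_zero)
  have hφ_symm (y : ℝ) : (C c * P).eval (φ.symm y) = Q.eval y := by simp [← hφ]
  have hφmult_symm (y : ℝ) : (derivative (C c * P)).rootMultiplicity (φ.symm y) =
      (derivative Q).rootMultiplicity y := by rw [← hφmult, φ.apply_symm_apply]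
  exact lipschitzEquivFun_iff.2 ⟨φ.toEquiv,
    exists_lipschitzWith_of_eval_comp_eq (φ := φ.toHomeomorph) hdeg' (hdeg' ▸ hQ) hφ hφmult,
    exists_lipschitzWith_of_eval_comp_eq (φ := φ.symm.toHomeomorph) hdeg'.symm hQ hφ_symm
      hφmult_symm,
    c, hc, fun x ↦ by simpa using hφ x⟩

lemma DirectlySimilar.comp_neg_X {t s : Fin p → ℝ} (h : DirectlySimilar P Q (t ∘ Fin.rev) s) :
    DirectlySimilar (P.comp (-X)) Q (fun i ↦ -t i.rev) s := by
  simpa [DirectlySimilar, multAt_comp_neg fun x ↦ P.eval x] using h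

end Equivalence

/-- Two polynomial functions of the same degree `d ≥ 1`, each with exactly `p ≥ 2`
critical points (enumerated in increasing order by `t` and `s`), are Lipschitz
equivalent iff their multiplicity symbols are similar (directly or reversely). -/
theorem stmt_5 (P Q : Polynomial ℝ) (d : ℕ) (hd : 1 ≤ d)
    (hP : P.natDegree = d) (hQ : Q.natDegree = d)
    (p : ℕ) (hp2 : 2 ≤ p)
    (t s : Fin p → ℝ) (ht : StrictMono t) (hs : StrictMono s)
    (htc : ∀ x : ℝ, P.derivative.eval x = 0 ↔ ∃ i, x = t i)
    (hsc : ∀ x : ℝ, Q.derivative.eval x = 0 ↔ ∃ i, x = s i) :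
    LipschitzEquivFun (fun x => P.eval x) (fun x => Q.eval x) ↔
      ((∃ c : ℝ, 0 < c ∧ ∀ i : Fin p, Q.eval (s i) = c * P.eval (t i) ∧
          multAt (fun x => Q.eval x) (s i) = multAt (fun x => P.eval x) (t i)) ∨
       (∃ c : ℝ, 0 < c ∧ ∀ i : Fin p, Q.eval (s i) = c * P.eval (t i.rev) ∧
          multAt (fun x => Q.eval x) (s i) = multAt (fun x => P.eval x) (t i.rev))) := by
  obtain ⟨n, rfl⟩ := Nat.exists_eq_add_of_le' hp2
  have htP : EnumeratesCriticalPoints P t := ⟨ht, htc⟩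
  have hsQ : EnumeratesCriticalPoints Q s := ⟨hs, hsc⟩
  have hdeg : P.natDegree = Q.natDegree := hP.trans hQ.symm
  change _ ↔ DirectlySimilar P Q t s ∨ DirectlySimilar P Q (t ∘ Fin.rev) s
  refine ⟨fun h ↦ h.directlySimilar htP hsQ, ?_⟩
  rintro (hdirect | hreverse)
  · exact hdirect.lipschitzEquivFun hdeg htP hsQ
  · have hdeg_neg : (P.comp (-X)).natDegree = Q.natDegree := by simpa [natDegree_comp] using hdeg
    have hneg := hreverse.comp_neg_X.lipschitzEquivFun hdeg_neg htP.comp_neg_X hsQ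
    simp only [eval_comp, eval_neg, eval_X] at hneg
    exact hneg.of_comp_neg
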